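/- arXiv:1608.01427 — 3 statements merged into one kernel-verified Lean document; each statement's English description precedes it below -/
import Mathlib

section
/- In B₄, the element β = σ₃ commutes with the product β₁β₂β₃; that is, σ₃·(σ₃⁻²σ₁⁻¹σ₂σ₁σ₃²)·σ₂·(σ₃²σ₁σ₂σ₁⁻¹σ₃⁻²) = (σ₃⁻²σ₁⁻¹σ₂σ₁σ₃²)·σ₂·(σ₃²σ₁σ₂σ₁⁻¹σ₃⁻²)·σ₃. -/
/-! Write `a, b, c` for `σ₁, σ₂, σ₃`. The product `β₁β₂β₃` is
`(c⁻²a⁻¹) (b a c² b c² a b) (a⁻¹c⁻²)`. Since `a` commutes with `c` and `aba = bab`, the middle factor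
is `b c² (aba) c² b = (b c² b) a (b c² b)`. Now `c` commutes with `bc²b` by the braid relation
(`bc_sq_b_commute`) and with `a`, hence with every factor, and so with `β₁β₂β₃`. -/

/-- The braid relations for the braid group B₄ on 4 strands, with Artin generators
σ₁ = of 0, σ₂ = of 1, σ₃ = of 2. -/
def braidRels4 : Set (FreeGroup (Fin 3)) :=
  { FreeGroup.of 0 * FreeGroup.of 1 * FreeGroup.of 0 *
      (FreeGroup.of 1 * FreeGroup.of 0 * FreeGroup.of 1)⁻¹,
    FreeGroup.of 1 * FreeGroup.of 2 * FreeGroup.of 1 *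
      (FreeGroup.of 2 * FreeGroup.of 1 * FreeGroup.of 2)⁻¹,
    FreeGroup.of 0 * FreeGroup.of 2 * (FreeGroup.of 2 * FreeGroup.of 0)⁻¹ }

/-- The braid group on 4 strands, as a presented group. -/
abbrev BraidGroup4 : Type := PresentedGroup braidRels4

/-- The Artin generators σ₁, σ₂, σ₃ of B₄. -/
def σ (i : Fin 3) : BraidGroup4 := PresentedGroup.of i

theorem σ_braid01 : σ 0 * σ 1 * σ 0 = σ 1 * σ 0 * σ 1 :=
  mul_inv_eq_one.mp (PresentedGroup.one_of_mem (rels := braidRels4) (Or.inl rfl))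

theorem σ_braid12 : σ 1 * σ 2 * σ 1 = σ 2 * σ 1 * σ 2 :=
  mul_inv_eq_one.mp (PresentedGroup.one_of_mem (rels := braidRels4) (Or.inr (Or.inl rfl)))

theorem σ_comm02 : σ 0 * σ 2 = σ 2 * σ 0 :=
  mul_inv_eq_one.mp (PresentedGroup.one_of_mem (rels := braidRels4) (Or.inr (Or.inr rfl)))

theorem bc_sq_b_commute {G : Type*} [Group G] {b c : G} (h : b * c * b = c * b * c) :
    Commute c (b * c ^ 2 * b) := by
  change c * (b * c ^ 2 * b) = b * c ^ 2 * b * c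
  calc c * (b * c ^ 2 * b) = (c * b * c) * (c * b) := by simp only [pow_two, mul_assoc]
    _ = b * c * (b * c * b) := by rw [← h]; simp only [mul_assoc]
    _ = b * c ^ 2 * b * c := by rw [h]; simp only [pow_two, mul_assoc]

/-- The rewriting of `β₁β₂β₃` as a product of elements of the centralizer of `c`. -/
theorem beta_product_eq {G : Type*} [Group G] {a b c : G} (hab : a * b * a = b * a * b)
    (hac : Commute a c) :
    ((c ^ 2)⁻¹ * a⁻¹ * b * a * c ^ 2) * b * (c ^ 2 * a * b * a⁻¹ * (c ^ 2)⁻¹) =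
      (c ^ 2)⁻¹ * a⁻¹ * ((b * c ^ 2 * b) * a * (b * c ^ 2 * b)) * (a⁻¹ * (c ^ 2)⁻¹) := by
  have hac2 : a * c ^ 2 = c ^ 2 * a := (hac.pow_right 2).eq
  calc _ = (c ^ 2)⁻¹ * a⁻¹ * (b * (a * c ^ 2) * b * (c ^ 2 * a) * b) * (a⁻¹ * (c ^ 2)⁻¹) := by
        simp only [mul_assoc]
    _ = (c ^ 2)⁻¹ * a⁻¹ * (b * (c ^ 2 * a) * b * (a * c ^ 2) * b) * (a⁻¹ * (c ^ 2)⁻¹) := by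
        rw [hac2]
    _ = (c ^ 2)⁻¹ * a⁻¹ * (b * c ^ 2 * (a * b * a) * c ^ 2 * b) * (a⁻¹ * (c ^ 2)⁻¹) := by
        simp only [mul_assoc]
    _ = _ := by rw [hab]; simp only [mul_assoc]

/-- Baykur–Van Horn-Morris: β = σ₃ commutes with β₁β₂β₃, where
β₁ = σ₃⁻²σ₁⁻¹σ₂σ₁σ₃², β₂ = σ₂, β₃ = σ₃²σ₁σ₂σ₁⁻¹σ₃⁻². -/
theorem beta_commutes_with_beta123 :
    σ 2 * ((((σ 2) ^ 2)⁻¹ * (σ 0)⁻¹ * σ 1 * σ 0 * (σ 2) ^ 2) * σ 1 *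
        ((σ 2) ^ 2 * σ 0 * σ 1 * (σ 0)⁻¹ * ((σ 2) ^ 2)⁻¹)) =
      ((((σ 2) ^ 2)⁻¹ * (σ 0)⁻¹ * σ 1 * σ 0 * (σ 2) ^ 2) * σ 1 *
        ((σ 2) ^ 2 * σ 0 * σ 1 * (σ 0)⁻¹ * ((σ 2) ^ 2)⁻¹)) * σ 2 := by
  have hac : Commute (σ 0) (σ 2) := σ_comm02
  rw [beta_product_eq σ_braid01 hac]
  have hX := bc_sq_b_commute σ_braid12
  have hc2 : Commute (σ 2) ((σ 2) ^ 2)⁻¹ := ((Commute.refl _).pow_right 2).inv_right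
  have ha : Commute (σ 2) (σ 0)⁻¹ := hac.symm.inv_right
  exact ((hc2.mul_right ha).mul_right
    ((hX.mul_right hac.symm).mul_right hX)).mul_right (ha.mul_right hc2)
end

section
/- Let k : ℂⁿ → ℝ be the function k(w) = ((|w₁|² + ⋯ + |w_n|²)² − |w₁² + ⋯ + w_n²|²)/4. Then for every w ∈ ℂⁿ and every c ∈ ℂ, the real Fréchet derivative of k at w, evaluated on the vector c·conj(w) (the componentwise complex conjugate of w scaled by c), is zero. In particular, for X′_j = (m+1)ζ^m·conj(w_j) one has dk_w(X′) = 0 and dk_w(iX′) = 0. -/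
/-! Put `A = ∑ |w_j|²` and `B = ∑ w_j²`, so that `k = (A² - |B|²)/4`. In the direction
`v = c·conj(w)` one has `dA(v) = 2 Re (c·conj B)` and `dB(v) = 2cA`. Hence both `d(A²)(v)` and
`d(|B|²)(v)` equal `4 A Re (c·conj B)`, and they cancel. The vectors `X′` and `iX′` are of the form
`c·conj(w)`. -/

/-- The real derivative of `|w|²` at `z` is `v ↦ 2⟪z, v⟫`, with `ℂ` seen as a real inner product space. -/
lemma hasFDerivAt_normSq (z : ℂ) :
    HasFDerivAt (fun w : ℂ => Complex.normSq w) (2 • innerSL ℝ z) z := by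
  simpa [Complex.normSq_eq_norm_sq] using (hasFDerivAt_id (𝕜 := ℝ) z).norm_sq

/-- The vanishing of `dk(c·conj(w))`, from which the statements about `X′` and `iX′` follow by
specializing `c`. -/
lemma fderiv_cutoff_smul_conj {n : ℕ} (w : Fin n → ℂ) (c : ℂ) :
    fderiv ℝ (fun w : Fin n → ℂ =>
      ((∑ j, Complex.normSq (w j)) ^ 2 - Complex.normSq (∑ j, (w j) ^ 2)) / 4) w
      (fun j => c * (starRingEnd ℂ) (w j)) = 0 := by
  have hproj (j : Fin n) : HasFDerivAt (fun w : Fin n → ℂ => w j)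
      (ContinuousLinearMap.proj (R := ℝ) (φ := fun _ : Fin n => ℂ) j) w := hasFDerivAt_apply j w
  have hA := HasFDerivAt.fun_sum (u := Finset.univ)
    fun j _ => (hasFDerivAt_normSq (w j)).comp w (hproj j)
  have hB := HasFDerivAt.fun_sum (u := Finset.univ) fun j _ => (hproj j).pow 2
  have hk := ((hA.pow 2).sub ((hasFDerivAt_normSq _).comp w hB)).mul_const (4⁻¹ : ℝ)
  -- with `v = c·conj(w)`, `A = ∑ |w_j|²`, `B = ∑ w_j²`: `dA(v) = 2 Re (c·conj B)`
  have hAv : (∑ j, (2 • innerSL ℝ (w j)) ∘SL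
        ContinuousLinearMap.proj (R := ℝ) (φ := fun _ : Fin n => ℂ) j)
        (fun j => c * (starRingEnd ℂ) (w j))
      = 2 * (c * (starRingEnd ℂ) (∑ j, w j ^ 2)).re := by
    simp only [map_sum, map_pow, Finset.mul_sum, Complex.re_sum, sum_apply]
    refine Finset.sum_congr rfl fun j _ => ?_
    simp [Complex.inner, sq]
    ring
  -- `dB(v) = 2cA`
  have hBv : (∑ j, (2 • w j ^ (2 - 1)) •
        ContinuousLinearMap.proj (R := ℝ) (φ := fun _ : Fin n => ℂ) j)
        (fun j => c * (starRingEnd ℂ) (w j))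
      = 2 * c * ((∑ j, Complex.normSq (w j) : ℝ) : ℂ) := by
    rw [Complex.ofReal_sum]
    rw [Finset.mul_sum, sum_apply]
    refine Finset.sum_congr rfl fun j _ => ?_
    rw [← Complex.mul_conj]
    simp
    ring
  have hk' : HasFDerivAt (fun w : Fin n → ℂ =>
      ((∑ j, Complex.normSq (w j)) ^ 2 - Complex.normSq (∑ j, (w j) ^ 2)) / 4) _ w := hk
  rw [hk'.fderiv]
  simp only [smul_apply, sub_apply,
    ContinuousLinearMap.comp_apply, hAv, hBv]
  generalize ∑ j, w j ^ 2 = B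
  simp only [Function.comp_apply]
  generalize ∑ j, Complex.normSq (w j) = A
  simp [Complex.inner]
  ring


/-- The cut-off function `k(w) = ((|w₁|² + ⋯ + |w_n|²)² − |w₁² + ⋯ + w_n²|²)/4` has vanishing
real derivative in every direction `c·conj(w)`; in particular `dk(X′) = 0` and `dk(iX′) = 0`
for the horizontal vector `X′_j = (m+1)ζ^m·conj(w_j)`. -/
theorem cutoff_derivative_vanishes
    (n : ℕ) (k : (Fin n → ℂ) → ℝ)
    (hk : ∀ w : Fin n → ℂ,
      k w = ((∑ j, Complex.normSq (w j)) ^ 2 - Complex.normSq (∑ j, (w j) ^ 2)) / 4) :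
    (∀ (w : Fin n → ℂ) (c : ℂ),
      fderiv ℝ k w (fun j => c * (starRingEnd ℂ) (w j)) = 0) ∧
    (∀ (w : Fin n → ℂ) (m : ℕ) (ζ : ℂ),
      fderiv ℝ k w (fun j => (((m : ℂ) + 1) * ζ ^ m) * (starRingEnd ℂ) (w j)) = 0 ∧
      fderiv ℝ k w (fun j => Complex.I * ((((m : ℂ) + 1) * ζ ^ m) * (starRingEnd ℂ) (w j))) = 0) := by
  obtain rfl : k = fun w => ((∑ j, Complex.normSq (w j)) ^ 2
      - Complex.normSq (∑ j, (w j) ^ 2)) / 4 := funext hk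
  refine ⟨fderiv_cutoff_smul_conj, fun w m ζ => ⟨fderiv_cutoff_smul_conj w _, ?_⟩⟩
  simpa only [mul_assoc] using fderiv_cutoff_smul_conj w (Complex.I * (((m : ℂ) + 1) * ζ ^ m))
end

section
/- There exist smooth functions h₁, h₂ : ℝ → ℝ such that: h₁(r) = 2 and h₂(r) = r² for all r in some neighborhood of 0; h₁(r) = e^{1−r} and h₂(r) = 1 for all r ∈ [1/2, 1]; and h₁(r)·h₂′(r) − h₂(r)·h₁′(r) ≠ 0 for all r ∈ (0, 1]. -/
/-!
Let `a` be a smooth nondecreasing cutoff with `a = 0` on `(-∞, 3/8]` and `a = 1` on `[1/2, ∞)`, and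
interpolate both profiles with it: `h₁ = (1 - a)·2 + a·e^{1-r}` and `h₂ = (1 - a)·r² + a`. Then
`h₁' = a'·(e^{1-r} - 2) - a·e^{1-r}` and `h₂' = a'·(1 - r²) + (1 - a)·2r`. Since `5/8 < log 2`,
`e^{1-r} ≤ 2` as soon as `r ≥ 3/8`, which contains the support of `a'`; hence `h₁' ≤ -a·e^{1-r}`,
and `h₂' ≥ (1 - a)·2r` on `[0, 1]`. As `h₁, h₂ > 0` on `(0, 1]`, this gives
`h₁h₂' - h₂h₁' ≥ h₁·(1 - a)·2r + h₂·a·e^{1-r} > 0`, because `a` and `1 - a` do not vanish together.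
-/

/-- A smooth nondecreasing cutoff, `0` on `(-∞, 3/8]` and `1` on `[1/2, ∞)`. -/
noncomputable def profileCutoff (r : ℝ) : ℝ := Real.smoothTransition (8 * r - 3)

lemma profileCutoff_contDiff : ContDiff ℝ (⊤ : ℕ∞) profileCutoff :=
  Real.smoothTransition.contDiff.comp (by fun_prop : ContDiff ℝ (⊤ : ℕ∞) fun r : ℝ => 8 * r - 3)

lemma profileCutoff_zero {r : ℝ} (h : r ≤ 3 / 8) : profileCutoff r = 0 :=
  Real.smoothTransition.zero_of_nonpos (by linarith)

lemma profileCutoff_one {r : ℝ} (h : 1 / 2 ≤ r) : profileCutoff r = 1 :=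
  Real.smoothTransition.one_of_one_le (by linarith)

lemma profileCutoff_deriv_nonneg (r : ℝ) : 0 ≤ deriv profileCutoff r :=
  Monotone.deriv_nonneg fun _ _ h => Real.smoothTransition.monotone (by linarith)

lemma profileCutoff_deriv_mul_nonpos (r : ℝ) :
    deriv profileCutoff r * (Real.exp (1 - r) - 2) ≤ 0 := by
  rcases lt_or_ge r (3 / 8) with h | h
  · have h0 : profileCutoff =ᶠ[nhds r] fun _ => (0 : ℝ) := by
      filter_upwards [Iio_mem_nhds h] with x hx
      exact profileCutoff_zero (le_of_lt hx)
    simp [h0.deriv_eq]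
  · refine mul_nonpos_of_nonneg_of_nonpos (profileCutoff_deriv_nonneg r) ?_
    have h2 : Real.exp (1 - r) ≤ 2 := by
      rw [← Real.le_log_iff_exp_le (by norm_num)]
      linarith [Real.log_two_gt_d9]
    linarith

open Real in
/-- The profile functions for the contact form `h₁(r)·λ|_{∂Σ} + h₂(r)·dθ` on the binding region
of an abstract contact open book: smooth `h₁, h₂ : ℝ → ℝ` with `h₁ = 2`, `h₂ = r²` near `0`,
`h₁ = e^{1−r}`, `h₂ = 1` on `[1/2, 1]`, and `h₁h₂′ − h₂h₁′ ≠ 0` for `r ∈ (0, 1]`. -/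
theorem exists_openbook_profile_functions :
    ∃ h₁ h₂ : ℝ → ℝ, ContDiff ℝ (⊤ : ℕ∞) h₁ ∧ ContDiff ℝ (⊤ : ℕ∞) h₂ ∧
      (∀ᶠ r in nhds (0 : ℝ), h₁ r = 2 ∧ h₂ r = r ^ 2) ∧
      (∀ r ∈ Set.Icc (1 / 2 : ℝ) 1, h₁ r = Real.exp (1 - r) ∧ h₂ r = 1) ∧
      (∀ r ∈ Set.Ioc (0 : ℝ) 1, h₁ r * deriv h₂ r - h₂ r * deriv h₁ r ≠ 0) := by
  have hs := profileCutoff_contDiff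
  refine ⟨fun r => (1 - profileCutoff r) * 2 + profileCutoff r * Real.exp (1 - r),
    fun r => (1 - profileCutoff r) * r ^ 2 + profileCutoff r, by fun_prop, by fun_prop, ?_, ?_, ?_⟩
  · filter_upwards [Iio_mem_nhds (show (0 : ℝ) < 3 / 8 by norm_num)] with r hr
    simp [profileCutoff_zero (le_of_lt hr)]
  · intro r hr
    simp [profileCutoff_one hr.1]
  · rintro r ⟨hr0, hr1⟩
    have ha : HasDerivAt profileCutoff (deriv profileCutoff r) r :=
      (hs.differentiable (by simp) r).hasDerivAt
    have he : HasDerivAt (fun x : ℝ => Real.exp (1 - x)) (Real.exp (1 - r) * (-1)) r :=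
      ((hasDerivAt_id r).const_sub 1).exp
    have h1 := ((ha.const_sub 1).mul_const 2).add (ha.mul he)
    have h2 := ((ha.const_sub 1).mul (hasDerivAt_pow 2 r)).add ha
    have e1 : deriv (fun r => (1 - profileCutoff r) * 2 + profileCutoff r * Real.exp (1 - r)) r
        = _ := h1.deriv
    have e2 : deriv (fun r => (1 - profileCutoff r) * r ^ 2 + profileCutoff r) r = _ := h2.deriv
    have hd := profileCutoff_deriv_nonneg r
    have hm := profileCutoff_deriv_mul_nonpos r
    have a0 : 0 ≤ profileCutoff r := Real.smoothTransition.nonneg _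
    have a1 : profileCutoff r ≤ 1 := Real.smoothTransition.le_one _
    have hE := Real.exp_pos (1 - r)
    simp only [e1, e2]
    generalize profileCutoff r = a at *
    generalize deriv profileCutoff r = d at *
    generalize Real.exp (1 - r) = E at *
    have b0 : 0 ≤ 1 - a := by linarith
    have hr2 : 0 ≤ 1 - r ^ 2 := by nlinarith
    have p1 : 0 < (1 - a) * 2 + a * E := by
      rcases a0.eq_or_lt with rfl | h
      · norm_num
      · positivity
    have p2 : 0 < (1 - a) * r ^ 2 + a := by
      rcases a0.eq_or_lt with rfl | h
      · simpa using pow_pos hr0 2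
      · positivity
    have q1 : 0 ≤ d * (1 - r ^ 2) := mul_nonneg hd hr2
    have key : 0 < ((1 - a) * 2 + a * E) * (d * (1 - r ^ 2) + (1 - a) * (2 * r))
        + ((1 - a) * r ^ 2 + a) * (-(d * (E - 2)) + a * E) := by
      have q2 : 0 ≤ -(d * (E - 2)) := by linarith
      rcases a0.eq_or_lt with h | h
      · have : 0 < (1 - a) * (2 * r) := by rw [← h]; linarith
        positivity
      · have : 0 ≤ (1 - a) * (2 * r) := by positivity
        positivity
    refine ne_of_gt (key.trans_eq ?_)
    push_cast
    ring
end
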